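/- Fix q ∈ (0,1], n ≥ 1, r ≥ 1, and an initial label configuration ρ, and let (Y_t, ζ_t)_{t≥0} be the frozen n-walker H–V walk in B_r. Define M_t := Σ_{i=1}^n a(Y_t^{(i)}) − N_t + ((2q−1)/q) Σ_{x ∈ ∪_{i=1}^n {Y_0^{(i)},…,Y_t^{(i)}}} (wt_{ζ_t}(x) − wt_{ζ_0}(x)), where N_t is the number of departures from the origin by the frozen walk up to time t. Then (M_t)_{t≥0} is a martingale with respect to the filtration F_t := σ(Y_0, ζ_0, …, Y_t, ζ_t). -/

import Mathlib

/-!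
The drift of `M` vanishes at every step because of two facts.

* The discrete Laplacian of the potential kernel is the point mass at the origin, that is
  `fH x + fV x = 1_{x = 0}` (`fH_add_fV`). The kernel is given as the limit of the partial sums
  `∑ i < m, (p_i(0) - p_i(x))`, so one has to know that these sums converge. By Fourier inversion
  on the torus, with `φ(θ) = (cos θ₁ + cos θ₂) / 2`, they are the integrals of
  `(1 - φ ^ m) / (1 - φ) * (1 - cos (x · θ))` up to normalization. Since
  `1 - cos (x · θ) ≤ C (1 - φ(θ))` the integrands are bounded, and `|φ| < 1` almost everywhere,
  so dominated convergence applies; it also gives `p_m(x) → 0`, and the Laplacian is obtained by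
  telescoping.

* When the active walker is at `x`, not frozen, and the current label of `x` is `H`, the
  potential kernel has drift `2 (1 - q) fV x + 2 q fH x`, which equals
  `(fH x + fV x) + (2 q - 1) (fH x - fV x)`. The first summand is the increment of the number
  of departures from the origin. The weight of `x` has expected increment `q (fV x - fH x)`, so
  the second summand is cancelled after multiplication with `(2 q - 1) / q`. The label `V` is
  symmetric (`tsum_weight_mul_incr`).

Events of the natural filtration at time `t` are countable disjoint unions of cylinder sets of
length `t`, on which the integral of the increment of `M` reduces to this one-step expectation.
Integrability holds because the walk almost surely makes unit steps, so that `M t` takes only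
finitely many values.
-/

open MeasureTheory Filter
open scoped ENNReal

namespace HV

abbrev Z2 := ℤ × ℤ

/-- A label configuration: `true` stands for label `H`, `false` for label `V`. -/
abbrev Config := Z2 → Bool

/-- The state of the walk: positions of the `n` walkers and the label configuration. -/
abbrev State (n : ℕ) := (Fin n → Z2) × Config

/-- A trajectory: the sequence of positions of the active walker after each step. -/
abbrev Path := ℕ → Z2

/-- The walker that is active at the `(t+1)`-st step of the cyclic turn order. -/
def active (n : ℕ) (hn : 0 < n) (t : ℕ) : Fin n := ⟨t % n, Nat.mod_lt t hn⟩

/-- Update the state when walker `i` moves to `y`: the label of the vertex the walker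
leaves becomes `H` (`true`) if the move was horizontal, `V` (`false`) if vertical. -/
def apply' (n : ℕ) (s : State n) (i : Fin n) (y : Z2) : State n :=
  (Function.update s.1 i y,
    Function.update s.2 (s.1 i) (if y.2 = (s.1 i).2 then true else false))

/-- The one-step transition probability of the `H`–`V` walk with parameter `q`:
probability that, from state `s`, the active walker `i` moves to `y`.  The label of the
current location is first resampled (flipped with probability `q`), and then the walker
takes a uniform horizontal step if the new label is `H`, a uniform vertical step if the
new label is `V`. -/
noncomputable def weight (q : ℝ) (n : ℕ) (s : State n) (i : Fin n) (y : Z2) : ℝ≥0∞ :=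
  if y = s.1 i + (1, 0) ∨ y = s.1 i - (1, 0) then
    ENNReal.ofReal ((if s.2 (s.1 i) then 1 - q else q) / 2)
  else if y = s.1 i + (0, 1) ∨ y = s.1 i - (0, 1) then
    ENNReal.ofReal ((if s.2 (s.1 i) then q else 1 - q) / 2)
  else 0

/-- The deterministic reconstruction of the state of the `n`-walker `H`–`V` walk
(with all walkers starting at the origin and initial labels `ρ`) from a trajectory. -/
def seq (n : ℕ) (hn : 0 < n) (ρ : Config) (y : Path) : ℕ → State n
  | 0 => (fun _ => (0, 0), ρ)
  | t + 1 => apply' n (seq n hn ρ y t) (active n hn t) (y t)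

/-- `μ` is the law of the `n`-walker `H`–`V` walk with parameter `q` and initial labels `ρ`:
the finite-dimensional distributions are products of one-step transition probabilities. -/
def IsLaw (q : ℝ) (n : ℕ) (hn : 0 < n) (ρ : Config) (μ : Measure Path) : Prop :=
  ∀ (t : ℕ) (c : Path),
    μ {y : Path | ∀ s < t, y s = c s} =
      ∏ s ∈ Finset.range t, weight q n (seq n hn ρ c s) (active n hn s) (c s)

/-- A trajectory is recurrent if every vertex is visited infinitely many times. -/
def Recurrent (n : ℕ) (hn : 0 < n) (ρ : Config) (y : Path) : Prop :=
  ∀ v : Z2, {t : ℕ | ∃ i, (seq n hn ρ y t).1 i = v}.Infinite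

end HV

namespace HV

/-- The Euclidean norm of a lattice point. -/
noncomputable def norm2 (x : Z2) : ℝ := Real.sqrt ((x.1 : ℝ) ^ 2 + (x.2 : ℝ) ^ 2)

/-- The open Euclidean ball `B_r` of radius `r` around the origin in `ℤ²`. -/
def ball (r : ℝ) : Set Z2 := {x | norm2 x < r}

/-- `x` and `y` are nearest neighbors in `ℤ²`. -/
def adj (x y : Z2) : Prop := |x.1 - y.1| + |x.2 - y.2| = 1

/-- The outer boundary `∂B_r` of the ball `B_r`. -/
def bdry (r : ℝ) : Set Z2 := {x | x ∉ ball r ∧ ∃ y, adj x y ∧ y ∈ ball r}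

open Classical in
/-- Update of the state of the frozen walk: a walker located on `∂B_r` is frozen and
skips its turn. -/
noncomputable def fapply (n : ℕ) (r : ℝ) (s : State n) (i : Fin n) (y : Z2) : State n :=
  if s.1 i ∈ bdry r then s else apply' n s i y

open Classical in
/-- The one-step transition probability of the frozen `H`–`V` walk: a walker located on
`∂B_r` stays put with probability one. -/
noncomputable def fweight (q : ℝ) (n : ℕ) (r : ℝ) (s : State n) (i : Fin n) (y : Z2) :
    ℝ≥0∞ :=
  if s.1 i ∈ bdry r then (if y = s.1 i then 1 else 0) else weight q n s i y

/-- The deterministic reconstruction of the state of the frozen `n`-walker `H`–`V` walk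
in `B_r` (with all walkers starting at the origin and initial labels `ρ`) from a
trajectory. -/
noncomputable def fseq (n : ℕ) (hn : 0 < n) (r : ℝ) (ρ : Config) (y : Path) :
    ℕ → State n
  | 0 => (fun _ => (0, 0), ρ)
  | t + 1 => fapply n r (fseq n hn r ρ y t) (active n hn t) (y t)

/-- `μ` is the law of the frozen `n`-walker `H`–`V` walk in `B_r` with parameter `q` and
initial labels `ρ`. -/
def IsFrozenLaw (q : ℝ) (n : ℕ) (hn : 0 < n) (r : ℝ) (ρ : Config) (μ : Measure Path) :
    Prop :=
  ∀ (t : ℕ) (c : Path),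
    μ {y : Path | ∀ s < t, y s = c s} =
      ∏ s ∈ Finset.range t, fweight q n r (fseq n hn r ρ c s) (active n hn s) (c s)

open Classical in
/-- `R_{t,r}`: the number of returns to the origin up to time `t` of a walk with state
sequence `S`. -/
noncomputable def returns (n : ℕ) (S : ℕ → State n) (t : ℕ) : ℕ :=
  ((Finset.Icc 1 t).filter fun s =>
    ∃ i, (S (s - 1)).1 i ≠ (0, 0) ∧ (S s).1 i = (0, 0)).card

open Classical in
/-- `N_t`: the number of departures from the origin up to time `t` of a walk with state
sequence `S`. -/
noncomputable def departures (n : ℕ) (S : ℕ → State n) (t : ℕ) : ℕ :=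
  ((Finset.Icc 1 t).filter fun s =>
    ∃ i, (S (s - 1)).1 i = (0, 0) ∧ (S s).1 i ≠ (0, 0)).card

/-- The return probability `p_{k,r}(ρ) = lim_{t→∞} P[R_{t,r} ≥ k]` of the frozen walk
with law `μr`. -/
noncomputable def returnProb (n : ℕ) (hn : 0 < n) (r : ℝ) (ρ : Config)
    (μr : Measure Path) (k : ℕ) : ℝ :=
  limUnder atTop fun t =>
    (μr {y : Path | k ≤ returns n (fun u => fseq n hn r ρ y u) t}).toReal

open Classical in
/-- The stopping time `τ_{k,r}(ρ)`: the first time at which the frozen walk has either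
returned to the origin `k` times or all walkers are frozen at `∂B_r`. -/
noncomputable def tau (n : ℕ) (hn : 0 < n) (r : ℝ) (ρ : Config) (k : ℕ) (y : Path) :
    ℕ :=
  sInf {t : ℕ | returns n (fun u => fseq n hn r ρ y u) t = k ∨
    ∀ i, (fseq n hn r ρ y t).1 i ∈ bdry r}

end HV

namespace HV

/-- `srw i x`: the probability that the simple random walk on `ℤ²` started at the
origin is at `x` after `i` steps. -/
noncomputable def srw : ℕ → Z2 → ℝ
  | 0, x => if x = (0, 0) then 1 else 0
  | i + 1, x =>
    (srw i (x + (1, 0)) + srw i (x - (1, 0)) + srw i (x + (0, 1)) + srw i (x - (0, 1))) / 4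

/-- The potential kernel `a` of the simple random walk on `ℤ²`:
`a(x) = lim_{m→∞} Σ_{i<m} (p_i(0,0) − p_i(x))`. -/
noncomputable def potKer (x : Z2) : ℝ :=
  limUnder atTop fun m : ℕ => ∑ i ∈ Finset.range m, (srw i (0, 0) - srw i x)

/-- `f_H(x) = (a(x+(0,1)) + a(x−(0,1)) − 2a(x))/4`. -/
noncomputable def fH (x : Z2) : ℝ :=
  (potKer (x + (0, 1)) + potKer (x - (0, 1)) - 2 * potKer x) / 4

/-- `f_V(x) = (a(x+(1,0)) + a(x−(1,0)) − 2a(x))/4`. -/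
noncomputable def fV (x : Z2) : ℝ :=
  (potKer (x + (1, 0)) + potKer (x - (1, 0)) - 2 * potKer x) / 4

/-- The weight `wt_ζ(x)` of the vertex `x` under the label configuration `ζ`. -/
noncomputable def wt (ζ : Config) (x : Z2) : ℝ := if ζ x then fH x else fV x

/-- `f(x) = max(|f_H(x)|, |f_V(x)|)`. -/
noncomputable def fMax (x : Z2) : ℝ := max |fH x| |fV x|

/-- The argument of a nonzero lattice point: the unique `θ ∈ (−π, π]` with
`x/|x| = (cos θ, sin θ)`. -/
noncomputable def argZ (x : Z2) : ℝ := Complex.arg ((x.1 : ℂ) + (x.2 : ℂ) * Complex.I)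

open Classical in
/-- The set of lattice points in the open Euclidean ball of radius `R`, as a finite
set. -/
noncomputable def ballFinset (R : ℝ) : Finset Z2 :=
  (Finset.Icc (-⌈R⌉, -⌈R⌉) (⌈R⌉, ⌈R⌉)).filter fun x => norm2 x < R

end HV

namespace HV

open Classical in
/-- The (finite) set of vertices visited by the walkers of a walk with state sequence
`S` up to time `t`. -/
noncomputable def visitedSet (n : ℕ) (S : ℕ → State n) (t : ℕ) : Finset Z2 :=
  ((Finset.range (t + 1)) ×ˢ (Finset.univ : Finset (Fin n))).image fun p => (S p.1).1 p.2

/-- The martingale `M_t` of the frozen `H`–`V` walk: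
`M_t = Σᵢ a(Y_t⁽ⁱ⁾) − N_t + ((2q−1)/q) Σ_{x visited} (wt_{ζ_t}(x) − wt_{ζ_0}(x))`. -/
noncomputable def mart (q : ℝ) (n : ℕ) (hn : 0 < n) (r : ℝ) (ρ : Config) (t : ℕ)
    (y : Path) : ℝ :=
  (∑ i : Fin n, potKer ((fseq n hn r ρ y t).1 i)) -
    (departures n (fun u => fseq n hn r ρ y u) t : ℝ) +
    (2 * q - 1) / q *
      ∑ x ∈ visitedSet n (fun u => fseq n hn r ρ y u) t,
        (wt ((fseq n hn r ρ y t).2) x - wt ρ x)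

lemma fseq_congr (n : ℕ) (hn : 0 < n) (r : ℝ) (ρ : Config) (t : ℕ) {y y' : Path}
    (h : ∀ s < t, y s = y' s) : fseq n hn r ρ y t = fseq n hn r ρ y' t := by
  induction t with
  | zero => rfl
  | succ t ih =>
    have h' : ∀ s < t, y s = y' s := fun s hs => h s (Nat.lt_succ_of_lt hs)
    simp only [fseq, ih h', h t (Nat.lt_succ_self t)]

instance : MeasurableSingletonClass (State n) := by infer_instance

lemma measurable_hist (n : ℕ) (hn : 0 < n) (r : ℝ) (ρ : Config) (t : ℕ) :
    Measurable fun (y : Path) (s : Fin (t + 1)) => fseq n hn r ρ y s := by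
  have hfac : (fun (y : Path) (s : Fin (t + 1)) => fseq n hn r ρ y s) =
      (fun (c : Fin t → Z2) (s : Fin (t + 1)) =>
          fseq n hn r ρ (fun u => if h : u < t then c ⟨u, h⟩ else (0, 0)) s) ∘
        (fun (y : Path) (u : Fin t) => y u) := by
    funext y
    simp only [Function.comp_apply]
    funext s
    refine fseq_congr n hn r ρ s (fun u hu => ?_)
    have hut : u < t := lt_of_lt_of_le hu (Nat.lt_succ_iff.mp s.isLt)
    simp [hut]
  rw [hfac]
  exact (measurable_of_countable _).comp
    (measurable_pi_lambda _ fun u => measurable_pi_apply _)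

/-- The natural filtration `F_t = σ(Y_0, ζ_0, …, Y_t, ζ_t)` of the frozen `H`–`V`
walk. -/
noncomputable def filt (n : ℕ) (hn : 0 < n) (r : ℝ) (ρ : Config) :
    MeasureTheory.Filtration ℕ (inferInstance : MeasurableSpace Path) where
  seq t :=
    MeasurableSpace.comap (fun (y : Path) (s : Fin (t + 1)) => fseq n hn r ρ y s)
      inferInstance
  mono' := by
    intro s t hst
    have hfac : (fun (y : Path) (u : Fin (s + 1)) => fseq n hn r ρ y u) =
        (fun (h : Fin (t + 1) → State n) (u : Fin (s + 1)) =>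
            h (Fin.castLE (by omega) u)) ∘
          (fun (y : Path) (u : Fin (t + 1)) => fseq n hn r ρ y u) := rfl
    dsimp only
    rw [hfac, ← MeasurableSpace.comap_comp]
    exact MeasurableSpace.comap_mono
      (Measurable.comap_le (measurable_pi_lambda _ fun u => measurable_pi_apply _))
  le' t := Measurable.comap_le (measurable_hist n hn r ρ t)

end HV

namespace HV

/-! ### The potential kernel -/

/-- Lebesgue measure on the torus `(-π, π]²`. -/
noncomputable def torus : Measure (ℝ × ℝ) :=
  (volume.restrict (Set.Ioc (-Real.pi) Real.pi)).prod
    (volume.restrict (Set.Ioc (-Real.pi) Real.pi))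

instance : IsFiniteMeasure torus := by unfold torus; infer_instance

/-- The characteristic function of one step of simple random walk on `ℤ²`. -/
noncomputable def chf (θ : ℝ × ℝ) : ℝ := (Real.cos θ.1 + Real.cos θ.2) / 2

/-- The real character `θ ↦ cos (x · θ)` of the torus attached to a lattice point. -/
noncomputable def character (x : Z2) (θ : ℝ × ℝ) : ℝ := Real.cos (x.1 * θ.1 + x.2 * θ.2)

lemma continuous_chf : Continuous chf := by unfold chf; fun_prop

lemma continuous_character (x : Z2) : Continuous (character x) := by unfold character; fun_prop

lemma abs_chf_le (θ : ℝ × ℝ) : |chf θ| ≤ 1 := by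
  unfold chf
  rw [abs_le]
  constructor <;> linarith [Real.neg_one_le_cos θ.1, Real.neg_one_le_cos θ.2,
    Real.cos_le_one θ.1, Real.cos_le_one θ.2]

lemma abs_character_le (x : Z2) (θ : ℝ × ℝ) : |character x θ| ≤ 1 := Real.abs_cos_le_one _

lemma integral_cos_int (k : ℤ) :
    ∫ u in Set.Ioc (-Real.pi) Real.pi, Real.cos (k * u) = if k = 0 then 2 * Real.pi else 0 := by
  rw [← intervalIntegral.integral_of_le (by linarith [Real.pi_pos])]
  split_ifs with h
  · simp [h]; ring
  · have hk : (k : ℝ) ≠ 0 := by exact_mod_cast h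
    rw [intervalIntegral.integral_comp_mul_left (fun u => Real.cos u) hk, integral_cos]
    simp [Real.sin_int_mul_pi]

lemma integral_sin_int (k : ℤ) :
    ∫ u in Set.Ioc (-Real.pi) Real.pi, Real.sin (k * u) = 0 := by
  rw [← intervalIntegral.integral_of_le (by linarith [Real.pi_pos])]
  by_cases h : k = 0
  · simp [h]
  · have hk : (k : ℝ) ≠ 0 := by exact_mod_cast h
    rw [intervalIntegral.integral_comp_mul_left (fun u => Real.sin u) hk, integral_sin]
    simp

lemma integrable_torus {f : ℝ × ℝ → ℝ} (hf : Continuous f) (C : ℝ) (h : ∀ θ, |f θ| ≤ C) :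
    Integrable f torus :=
  Integrable.of_bound hf.aestronglyMeasurable C (Eventually.of_forall h)

lemma abs_pow_mul_character_le (i : ℕ) (x : Z2) (θ : ℝ × ℝ) :
    |chf θ ^ i * character x θ| ≤ 1 := by
  rw [abs_mul, abs_pow]
  exact mul_le_one₀ (pow_le_one₀ (abs_nonneg _) (abs_chf_le θ)) (abs_nonneg _)
    (abs_character_le x θ)

lemma integrable_pow_mul_character (i : ℕ) (x : Z2) :
    Integrable (fun θ => chf θ ^ i * character x θ) torus :=
  integrable_torus ((continuous_chf.pow i).mul (continuous_character x)) 1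
    (abs_pow_mul_character_le i x)

/-- Orthogonality of the characters of the torus. -/
lemma integral_character (x : Z2) :
    ∫ θ, character x θ ∂torus = if x = (0, 0) then 4 * Real.pi ^ 2 else 0 := by
  have h1 : Integrable (fun θ : ℝ × ℝ => Real.cos (x.1 * θ.1) * Real.cos (x.2 * θ.2)) torus :=
    integrable_torus (by fun_prop) 1 fun θ => by
      rw [abs_mul]
      exact mul_le_one₀ (Real.abs_cos_le_one _) (abs_nonneg _) (Real.abs_cos_le_one _)
  have h2 : Integrable (fun θ : ℝ × ℝ => Real.sin (x.1 * θ.1) * Real.sin (x.2 * θ.2)) torus :=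
    integrable_torus (by fun_prop) 1 fun θ => by
      rw [abs_mul]
      exact mul_le_one₀ (Real.abs_sin_le_one _) (abs_nonneg _) (Real.abs_sin_le_one _)
  simp only [character, Real.cos_add]
  rw [integral_sub h1 h2]
  unfold torus
  rw [integral_prod_mul (fun u : ℝ => Real.cos (x.1 * u)) (fun u : ℝ => Real.cos (x.2 * u)),
    integral_prod_mul (fun u : ℝ => Real.sin (x.1 * u)) (fun u : ℝ => Real.sin (x.2 * u)),
    integral_cos_int, integral_cos_int, integral_sin_int]
  obtain ⟨a, b⟩ := x
  by_cases ha : a = 0 <;> by_cases hb : b = 0 <;> simp [ha, hb]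
  ring

lemma chf_mul_character (x : Z2) (θ : ℝ × ℝ) :
    chf θ * character x θ = (character (x + (1, 0)) θ + character (x - (1, 0)) θ +
      character (x + (0, 1)) θ + character (x - (0, 1)) θ) / 4 := by
  simp only [character, chf, Prod.fst_add, Prod.snd_add, Prod.fst_sub, Prod.snd_sub]
  push_cast
  have e1 : ((x.1 : ℝ) + 1) * θ.1 + (x.2 + 0) * θ.2 = (x.1 * θ.1 + x.2 * θ.2) + θ.1 := by ring
  have e2 : ((x.1 : ℝ) - 1) * θ.1 + (x.2 - 0) * θ.2 = (x.1 * θ.1 + x.2 * θ.2) - θ.1 := by ring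
  have e3 : ((x.1 : ℝ) + 0) * θ.1 + (x.2 + 1) * θ.2 = (x.1 * θ.1 + x.2 * θ.2) + θ.2 := by ring
  have e4 : ((x.1 : ℝ) - 0) * θ.1 + (x.2 - 1) * θ.2 = (x.1 * θ.1 + x.2 * θ.2) - θ.2 := by ring
  rw [e1, e2, e3, e4]
  generalize (x.1 * θ.1 + x.2 * θ.2 : ℝ) = w
  simp only [Real.cos_add, Real.cos_sub]
  ring

/-- Fourier inversion for the transition probabilities of simple random walk. -/
lemma integral_pow_mul_character (i : ℕ) (x : Z2) :
    ∫ θ, chf θ ^ i * character x θ ∂torus = 4 * Real.pi ^ 2 * srw i x := by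
  induction i generalizing x with
  | zero => simp only [pow_zero, one_mul, integral_character, srw]; split_ifs <;> simp
  | succ i ih =>
    have e : ∀ θ, chf θ ^ (i + 1) * character x θ =
        (chf θ ^ i * character (x + (1, 0)) θ + chf θ ^ i * character (x - (1, 0)) θ +
        chf θ ^ i * character (x + (0, 1)) θ + chf θ ^ i * character (x - (0, 1)) θ) / 4 := by
      intro θ
      rw [pow_succ, mul_assoc, chf_mul_character]; ring
    have hI := integrable_pow_mul_character i
    simp_rw [e]
    rw [integral_div, integral_add (((hI _).fun_add (hI _)).fun_add (hI _)) (hI _),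
      integral_add ((hI _).fun_add (hI _)) (hI _), integral_add (hI _) (hI _), ih, ih, ih, ih, srw]
    ring

/-- Only `θ = 0` and `θ = (π, π)` give a characteristic function of modulus one. -/
lemma abs_chf_lt_one_ae : ∀ᵐ θ ∂torus, |chf θ| < 1 := by
  have hfst : ∀ u : ℝ, ∀ᵐ θ ∂torus, θ.1 ≠ u := by
    intro u
    exact (Measure.quasiMeasurePreserving_fst (μ := volume.restrict (Set.Ioc (-Real.pi) Real.pi))
      (ν := volume.restrict (Set.Ioc (-Real.pi) Real.pi))).ae
      (p := fun v => v ≠ u) (Measure.ae_ne _ u)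
  have hmem : ∀ᵐ θ ∂torus, θ.1 ∈ Set.Ioc (-Real.pi) Real.pi := by
    exact (Measure.quasiMeasurePreserving_fst (μ := volume.restrict (Set.Ioc (-Real.pi) Real.pi))
      (ν := volume.restrict (Set.Ioc (-Real.pi) Real.pi))).ae
      (p := fun v => v ∈ Set.Ioc (-Real.pi) Real.pi) (ae_restrict_mem measurableSet_Ioc)
  filter_upwards [hfst 0, hfst Real.pi, hmem] with θ h0 hpi hθ
  have hs : Real.sin θ.1 ≠ 0 := by
    rcases lt_or_gt_of_ne h0 with h | h
    · exact (Real.sin_neg_of_neg_of_neg_pi_lt h hθ.1).ne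
    · exact (Real.sin_pos_of_pos_of_lt_pi h (lt_of_le_of_ne hθ.2 hpi)).ne'
  have hc : |Real.cos θ.1| < 1 := by
    rw [← sq_lt_one_iff_abs_lt_one]
    nlinarith [Real.sin_sq_add_cos_sq θ.1, sq_pos_of_ne_zero hs]
  rw [abs_lt] at hc
  unfold chf
  rw [abs_lt]
  constructor <;> linarith [Real.neg_one_le_cos θ.2, Real.cos_le_one θ.2]

lemma one_sub_cos_add_le (u v : ℝ) :
    1 - Real.cos (u + v) ≤ 2 * (1 - Real.cos u) + 2 * (1 - Real.cos v) := by
  rw [Real.cos_add]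
  nlinarith [Real.sin_sq_add_cos_sq u, Real.sin_sq_add_cos_sq v, Real.cos_le_one u,
    Real.cos_le_one v, sq_nonneg (Real.sin u - Real.sin v), sq_nonneg (Real.cos u + Real.cos v - 2),
    mul_nonneg (sub_nonneg.2 (Real.cos_le_one u)) (sub_nonneg.2 (Real.cos_le_one v))]

lemma one_sub_cos_nat_le (k : ℕ) : ∃ C : ℝ, 0 ≤ C ∧
    ∀ u : ℝ, 1 - Real.cos (k * u) ≤ C * (1 - Real.cos u) := by
  induction k with
  | zero => exact ⟨0, le_rfl, fun u => by simp⟩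
  | succ k ih =>
    obtain ⟨C, hC, h⟩ := ih
    refine ⟨2 * C + 2, by positivity, fun u => ?_⟩
    have := one_sub_cos_add_le (k * u) u
    push_cast
    rw [add_mul, one_mul]
    linarith [h u]

lemma one_sub_cos_int_le (k : ℤ) : ∃ C : ℝ, 0 ≤ C ∧
    ∀ u : ℝ, 1 - Real.cos (k * u) ≤ C * (1 - Real.cos u) := by
  obtain ⟨m, rfl | rfl⟩ := k.eq_nat_or_neg
  · exact_mod_cast one_sub_cos_nat_le m
  · simpa using one_sub_cos_nat_le m

/-- The singularity of `1 / (1 - chf)` is compensated by `1 - character x`. -/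
lemma one_sub_character_le (x : Z2) : ∃ C : ℝ, 0 ≤ C ∧
    ∀ θ, 1 - character x θ ≤ C * (1 - chf θ) := by
  obtain ⟨C₁, h₁, H₁⟩ := one_sub_cos_int_le x.1
  obtain ⟨C₂, h₂, H₂⟩ := one_sub_cos_int_le x.2
  refine ⟨4 * (C₁ + C₂), by positivity, fun θ => ?_⟩
  have := one_sub_cos_add_le (x.1 * θ.1) (x.2 * θ.2)
  unfold character chf
  nlinarith [H₁ θ.1, H₂ θ.2, mul_nonneg h₁ (sub_nonneg.2 (Real.cos_le_one θ.2)),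
    mul_nonneg h₂ (sub_nonneg.2 (Real.cos_le_one θ.1))]

lemma tendsto_srw (x : Z2) : Tendsto (fun m => srw m x) atTop (nhds 0) := by
  have h : Tendsto (fun m : ℕ => ∫ θ, chf θ ^ m * character x θ ∂torus) atTop
      (nhds (∫ _, (0 : ℝ) ∂torus)) := by
    refine tendsto_integral_of_dominated_convergence (fun _ => 1)
      (fun m => (integrable_pow_mul_character m x).aestronglyMeasurable)
      (integrable_const _) (fun m => Eventually.of_forall (abs_pow_mul_character_le m x)) ?_
    filter_upwards [abs_chf_lt_one_ae] with θ hθ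
    simpa using (tendsto_pow_atTop_nhds_zero_of_abs_lt_one hθ).mul_const (character x θ)
  simp only [integral_pow_mul_character, integral_zero] at h
  have hpi : (4 * Real.pi ^ 2) ≠ 0 := by positivity
  have h' := (h.const_mul (4 * Real.pi ^ 2)⁻¹).congr fun m => inv_mul_cancel_left₀ hpi _
  rwa [mul_zero] at h'

/-- The series defining the potential kernel converges: under the Fourier integral its partial
sums are `(1 - chf ^ m) / (1 - chf) * (1 - character x)`, which are bounded and converge
almost everywhere. -/
lemma tendsto_potKer (x : Z2) :
    Tendsto (fun m : ℕ => ∑ i ∈ Finset.range m, (srw i (0, 0) - srw i x)) atTop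
      (nhds (potKer x)) := by
  refine tendsto_nhds_limUnder ?_
  obtain ⟨C, hC, H⟩ := one_sub_character_le x
  set F : ℕ → ℝ × ℝ → ℝ := fun m θ => (∑ i ∈ Finset.range m, chf θ ^ i) * (1 - character x θ)
    with hF
  have hbound : ∀ m θ, |F m θ| ≤ 2 * C := by
    intro m θ
    have h0 : 0 ≤ 1 - character x θ := by linarith [(abs_le.1 (abs_character_le x θ)).2]
    have h1 : 0 ≤ 1 - chf θ := by linarith [(abs_le.1 (abs_chf_le θ)).2]
    have hpow : |1 - chf θ ^ m| ≤ 2 := by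
      have : |chf θ ^ m| ≤ 1 := by
        rw [abs_pow]; exact pow_le_one₀ (abs_nonneg _) (abs_chf_le θ)
      rw [abs_le] at this ⊢
      constructor <;> linarith
    have hg := mul_neg_geom_sum (chf θ) m
    calc |F m θ| = |∑ i ∈ Finset.range m, chf θ ^ i| * (1 - character x θ) := by
          rw [hF]; simp only [abs_mul, abs_of_nonneg h0]
      _ ≤ |∑ i ∈ Finset.range m, chf θ ^ i| * (C * (1 - chf θ)) := by gcongr; exact H θ
      _ = C * |(1 - chf θ) * ∑ i ∈ Finset.range m, chf θ ^ i| := by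
          rw [abs_mul, abs_of_nonneg h1]; ring
      _ ≤ C * 2 := by rw [hg]; gcongr
      _ = 2 * C := by ring
  have hcont : ∀ m, Continuous (F m) := by
    intro m
    have := continuous_chf
    have := continuous_character x
    simp only [hF]
    fun_prop
  have hlim : Tendsto (fun m => ∫ θ, F m θ ∂torus) atTop
      (nhds (∫ θ, (1 - chf θ)⁻¹ * (1 - character x θ) ∂torus)) := by
    refine tendsto_integral_of_dominated_convergence (fun _ => 2 * C)
      (fun m => (hcont m).aestronglyMeasurable)
      (integrable_const _) (fun m => Eventually.of_forall (hbound m)) ?_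
    filter_upwards [abs_chf_lt_one_ae] with θ hθ
    exact (hasSum_geometric_of_abs_lt_one hθ).tendsto_sum_nat.mul_const _
  have hpi : (4 * Real.pi ^ 2) ≠ 0 := by positivity
  have hval : ∀ m, ∫ θ, F m θ ∂torus =
      4 * Real.pi ^ 2 * ∑ i ∈ Finset.range m, (srw i (0, 0) - srw i x) := by
    intro m
    have e : ∀ θ, F m θ = ∑ i ∈ Finset.range m,
        (chf θ ^ i * character (0, 0) θ - chf θ ^ i * character x θ) := by
      intro θ
      simp only [hF, Finset.sum_mul]
      refine Finset.sum_congr rfl fun i _ => ?_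
      simp [character]; ring
    simp_rw [e]
    rw [integral_finsetSum, Finset.mul_sum]
    swap
    · exact fun i _ =>
        (integrable_pow_mul_character i (0, 0)).sub (integrable_pow_mul_character i x)
    refine Finset.sum_congr rfl fun i _ => ?_
    rw [integral_sub (integrable_pow_mul_character i (0, 0)) (integrable_pow_mul_character i x),
      integral_pow_mul_character, integral_pow_mul_character]
    ring
  refine ⟨(4 * Real.pi ^ 2)⁻¹ * ∫ θ, (1 - chf θ)⁻¹ * (1 - character x θ) ∂torus, ?_⟩
  simp only [hval] at hlim
  exact (hlim.const_mul (4 * Real.pi ^ 2)⁻¹).congr fun m => inv_mul_cancel_left₀ hpi _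

/-- The discrete Laplacian of the potential kernel is the point mass at the origin. -/
lemma fH_add_fV (x : Z2) : fH x + fV x = if x = (0, 0) then 1 else 0 := by
  have h4 := (((tendsto_potKer (x + (1, 0))).add (tendsto_potKer (x - (1, 0)))).add
    (tendsto_potKer (x + (0, 1)))).add (tendsto_potKer (x - (0, 1)))
  have hd := (h4.sub ((tendsto_potKer x).const_mul 4)).div_const 4
  have key : ∀ m : ℕ, (∑ i ∈ Finset.range m, (srw i (0, 0) - srw i (x + (1, 0))) +
      ∑ i ∈ Finset.range m, (srw i (0, 0) - srw i (x - (1, 0))) +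
      ∑ i ∈ Finset.range m, (srw i (0, 0) - srw i (x + (0, 1))) +
      ∑ i ∈ Finset.range m, (srw i (0, 0) - srw i (x - (0, 1))) -
      4 * ∑ i ∈ Finset.range m, (srw i (0, 0) - srw i x)) / 4 = srw 0 x - srw m x := by
    intro m
    induction m with
    | zero => simp
    | succ m ih =>
      have hs : srw (m + 1) x = (srw m (x + (1, 0)) + srw m (x - (1, 0)) + srw m (x + (0, 1)) +
        srw m (x - (0, 1))) / 4 := rfl
      simp only [Finset.sum_range_succ] at ih ⊢
      rw [hs]
      linarith
  have hr : Tendsto (fun m => srw 0 x - srw m x) atTop (nhds (srw 0 x - 0)) :=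
    (tendsto_srw x).const_sub _
  have := tendsto_nhds_unique (hd.congr key) hr
  rw [sub_zero] at this
  change _ = srw 0 x
  rw [← this, fH, fV]
  ring
end HV

namespace HV

/-! ### One step of the frozen walk -/

/-- The increment of the process when the active walker `i`, in state `s` and not frozen,
moves to `v`. -/
noncomputable def incr (q : ℝ) (n : ℕ) (s : State n) (i : Fin n) (v : Z2) : ℝ :=
  potKer v - potKer (s.1 i) - (if s.1 i = (0, 0) ∧ v ≠ (0, 0) then 1 else 0) +
    (2 * q - 1) / q * (wt (apply' n s i v).2 (s.1 i) - wt s.2 (s.1 i))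

lemma mem_visitedSet (n : ℕ) (S : ℕ → State n) (t : ℕ) (x : Z2) :
    x ∈ visitedSet n S t ↔ ∃ u ≤ t, ∃ i, (S u).1 i = x := by
  simp [visitedSet]

lemma fseq_label_of_notMem (n : ℕ) (hn : 0 < n) (r : ℝ) (ρ : Config) (y : Path) (t : ℕ) (x : Z2)
    (hx : x ∉ visitedSet n (fun u => fseq n hn r ρ y u) t) :
    (fseq n hn r ρ y t).2 x = ρ x := by
  induction t with
  | zero => rfl
  | succ t ih =>
    simp only [mem_visitedSet, not_exists, not_and] at ih hx
    have hx' := hx t (Nat.le_succ t) (active n hn t)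
    rw [← ih fun u hu => hx u (hu.trans (Nat.le_succ t))]
    simp only [fseq, fapply]
    split_ifs
    · rfl
    · simp [apply', Function.update_of_ne (Ne.symm hx')]

/-- Vertices visited for the first time at time `t + 1` carry their initial label, so the
correction term only changes at the vertex the active walker leaves. -/
lemma sum_visitedSet_succ (n : ℕ) (hn : 0 < n) (r : ℝ) (ρ : Config) (y : Path) (t : ℕ)
    (h : (fseq n hn r ρ y t).1 (active n hn t) ∉ bdry r) :
    ∑ x ∈ visitedSet n (fun u => fseq n hn r ρ y u) (t + 1),
        (wt (fseq n hn r ρ y (t + 1)).2 x - wt ρ x) =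
      ∑ x ∈ visitedSet n (fun u => fseq n hn r ρ y u) t,
        (wt (fseq n hn r ρ y t).2 x - wt ρ x) +
      (wt (fseq n hn r ρ y (t + 1)).2 ((fseq n hn r ρ y t).1 (active n hn t)) -
        wt (fseq n hn r ρ y t).2 ((fseq n hn r ρ y t).1 (active n hn t))) := by
  set V := visitedSet n (fun u => fseq n hn r ρ y u) t with hV
  set z := (fseq n hn r ρ y t).1 (active n hn t) with hz
  have hzV : z ∈ V := (mem_visitedSet _ _ _ _).2 ⟨t, le_rfl, _, rfl⟩
  have hne : ∀ x, x ≠ z → (fseq n hn r ρ y (t + 1)).2 x = (fseq n hn r ρ y t).2 x := by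
    intro x hx
    rw [fseq, fapply, if_neg h]
    simp only [apply']
    rw [Function.update_of_ne hx]
  have hsub : V ⊆ visitedSet n (fun u => fseq n hn r ρ y u) (t + 1) := by
    intro x hx
    obtain ⟨u, hu, i, hi⟩ := (mem_visitedSet _ _ _ _).1 hx
    exact (mem_visitedSet _ _ _ _).2 ⟨u, hu.trans (Nat.le_succ t), i, hi⟩
  rw [← Finset.sum_subset hsub, ← sub_eq_iff_eq_add', ← Finset.sum_sub_distrib]
  · rw [Finset.sum_eq_single_of_mem z hzV]
    · ring
    · intro x _ hx
      simp only [wt, hne x hx]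
      ring
  · intro x _ hx
    have hxz : x ≠ z := fun e => hx (e ▸ hzV)
    simp only [wt, hne x hxz, fseq_label_of_notMem n hn r ρ y t x hx]
    ring

lemma departures_succ (n : ℕ) (hn : 0 < n) (r : ℝ) (ρ : Config) (y : Path) (t : ℕ)
    (h : (fseq n hn r ρ y t).1 (active n hn t) ∉ bdry r) :
    (departures n (fun u => fseq n hn r ρ y u) (t + 1) : ℝ) =
      departures n (fun u => fseq n hn r ρ y u) t +
      (if (fseq n hn r ρ y t).1 (active n hn t) = (0, 0) ∧ y t ≠ (0, 0) then 1 else 0) := by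
  classical
  have hiff : (∃ i, (fseq n hn r ρ y (t + 1 - 1)).1 i = (0, 0) ∧
      (fseq n hn r ρ y (t + 1)).1 i ≠ (0, 0)) ↔
      ((fseq n hn r ρ y t).1 (active n hn t) = (0, 0) ∧ y t ≠ (0, 0)) := by
    have e : (fseq n hn r ρ y (t + 1)).1 =
        Function.update (fseq n hn r ρ y t).1 (active n hn t) (y t) := by
      rw [fseq, fapply, if_neg h]; rfl
    rw [e, Nat.add_sub_cancel]
    constructor
    · rintro ⟨i, h0, h1⟩
      by_cases hi : i = active n hn t
      · subst hi
        rw [Function.update_self] at h1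
        exact ⟨h0, h1⟩
      · rw [Function.update_of_ne hi] at h1
        exact absurd h0 h1
    · rintro ⟨h0, h1⟩
      exact ⟨_, h0, by rwa [Function.update_self]⟩
  unfold departures
  rw [← Finset.insert_Icc_right_eq_Icc_add_one (by omega : 1 ≤ t + 1), Finset.filter_insert]
  simp only [hiff]
  split_ifs
  · rw [Finset.card_insert_of_notMem (by simp)]
    push_cast
    rfl
  · simp

lemma mart_succ (q : ℝ) (n : ℕ) (hn : 0 < n) (r : ℝ) (ρ : Config) (y : Path) (t : ℕ)
    (h : (fseq n hn r ρ y t).1 (active n hn t) ∉ bdry r) :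
    mart q n hn r ρ (t + 1) y - mart q n hn r ρ t y =
      incr q n (fseq n hn r ρ y t) (active n hn t) (y t) := by
  have e : fseq n hn r ρ y (t + 1) = apply' n (fseq n hn r ρ y t) (active n hn t) (y t) := by
    rw [fseq, fapply, if_neg h]
  have hpot : ∑ i, potKer ((fseq n hn r ρ y (t + 1)).1 i) =
      ∑ i, potKer ((fseq n hn r ρ y t).1 i) +
        (potKer (y t) - potKer ((fseq n hn r ρ y t).1 (active n hn t))) := by
    rw [← sub_eq_iff_eq_add', ← Finset.sum_sub_distrib,
      Finset.sum_eq_single_of_mem (active n hn t) (Finset.mem_univ _)]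
    · rw [e]; simp [apply']
    · intro i _ hi
      rw [e]; simp [apply', Function.update_of_ne hi]
  unfold mart incr
  rw [hpot, departures_succ n hn r ρ y t h, sum_visitedSet_succ n hn r ρ y t h, e]
  ring

lemma mart_succ_frozen (q : ℝ) (n : ℕ) (hn : 0 < n) (r : ℝ) (ρ : Config) (y : Path) (t : ℕ)
    (h : (fseq n hn r ρ y t).1 (active n hn t) ∈ bdry r) :
    mart q n hn r ρ (t + 1) y = mart q n hn r ρ t y := by
  classical
  have e : fseq n hn r ρ y (t + 1) = fseq n hn r ρ y t := by
    rw [fseq, fapply, if_pos h]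
  have hd : departures n (fun u => fseq n hn r ρ y u) (t + 1) =
      departures n (fun u => fseq n hn r ρ y u) t := by
    unfold departures
    rw [← Finset.insert_Icc_right_eq_Icc_add_one (by omega : 1 ≤ t + 1), Finset.filter_insert,
      if_neg]
    rintro ⟨i, h0, h1⟩
    simp only [e] at h1
    exact h1 h0
  have hv : visitedSet n (fun u => fseq n hn r ρ y u) (t + 1) =
      visitedSet n (fun u => fseq n hn r ρ y u) t := by
    ext x
    simp only [mem_visitedSet]
    constructor
    · rintro ⟨u, hu, i, hi⟩
      rcases Nat.le_succ_iff.1 hu with hu | rfl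
      · exact ⟨u, hu, i, hi⟩
      · exact ⟨t, le_rfl, i, by rw [← hi, e]⟩
    · rintro ⟨u, hu, i, hi⟩
      exact ⟨u, hu.trans (Nat.le_succ t), i, hi⟩
  unfold mart
  rw [hd, hv, e]

lemma weight_eq_zero (q : ℝ) (n : ℕ) (s : State n) (i : Fin n) (v : Z2)
    (hv : v ∉ ({s.1 i + (1, 0), s.1 i - (1, 0), s.1 i + (0, 1), s.1 i - (0, 1)} : Finset Z2)) :
    weight q n s i v = 0 := by
  simp only [Finset.mem_insert, Finset.mem_singleton, not_or] at hv
  obtain ⟨h1, h2, h3, h4⟩ := hv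
  simp [weight, h1, h2, h3, h4]

/-- The drift vanishes: the potential kernel drifts by `(f_H + f_V) + (2q - 1) (f_H - f_V)`
(up to exchanging `H` and `V`), the first part is the expected number of departures from the
origin, and the second part is cancelled by the label flip of probability `q`. -/
lemma tsum_weight_mul_incr (q : ℝ) (hq : q ∈ Set.Ioc (0 : ℝ) 1) (n : ℕ) (s : State n)
    (i : Fin n) : ∑' v, (weight q n s i v).toReal * incr q n s i v = 0 := by
  have hq0 : q ≠ 0 := hq.1.ne'
  have h1q : 0 ≤ 1 - q := by linarith [hq.2]
  rw [tsum_eq_sum (s := {s.1 i + (1, 0), s.1 i - (1, 0), s.1 i + (0, 1), s.1 i - (0, 1)})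
    fun v hv => by rw [weight_eq_zero q n s i v hv]; simp]
  have hlap := fH_add_fV (s.1 i)
  obtain ⟨⟨a, b⟩, hx⟩ : ∃ x, s.1 i = x := ⟨_, rfl⟩
  rw [Finset.sum_insert (by simp [hx]; omega), Finset.sum_insert (by simp [hx]),
    Finset.sum_insert (by simp [hx]; omega), Finset.sum_singleton]
  have d1 : ((1 - q) / 2 : ℝ) ≥ 0 := by linarith
  have d2 : (q / 2 : ℝ) ≥ 0 := by linarith [hq.1]
  have hdep : ∀ v : Z2, v ≠ 0 →
      (if (a, b) = ((0, 0) : Z2) ∧ (a, b) + v ≠ ((0, 0) : Z2) then (1 : ℝ) else 0) =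
        fH (a, b) + fV (a, b) := by
    intro v hv
    rw [hx] at hlap
    rw [hlap]
    by_cases h : (a, b) = ((0, 0) : Z2)
    · have hne : (a, b) + v ≠ ((0, 0) : Z2) := by
        rw [h, ← Prod.zero_eq_mk, zero_add]
        exact hv
      rw [if_pos h, if_pos ⟨h, hne⟩]
    · rw [if_neg h, if_neg fun h' => h h'.1]
  have e1 := hdep (1, 0) (by simp)
  have e2 := hdep (-(1, 0)) (by simp)
  have e3 := hdep (0, 1) (by simp)
  have e4 := hdep (-(0, 1)) (by simp)
  rw [← sub_eq_add_neg] at e2 e4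
  unfold incr
  simp only [hx, e1, e2, e3, e4]
  simp only [weight, apply', wt, hx, Function.update_self]
  have hH : 4 * fH (a, b) =
      potKer ((a, b) + (0, 1)) + potKer ((a, b) - (0, 1)) - 2 * potKer (a, b) := by
    rw [fH]; ring
  have hV : 4 * fV (a, b) =
      potKer ((a, b) + (1, 0)) + potKer ((a, b) - (1, 0)) - 2 * potKer (a, b) := by
    rw [fV]; ring
  simp only [Prod.mk_add_mk, Prod.mk_sub_mk, add_zero, sub_zero] at hH hV
  cases s.2 (a, b)
  · simp [ENNReal.toReal_ofReal, d1, d2]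
    field_simp
    linear_combination (-q) * hV - (1 - q) * hH
  · simp [ENNReal.toReal_ofReal, d1, d2]
    field_simp
    linear_combination (-q) * hH - (1 - q) * hV

end HV

namespace HV

/-! ### Cylinder sets and the martingale property -/

/-- The cylinder set of trajectories that agree with `c` before time `t`. -/
def cyl (t : ℕ) (c : Path) : Set Path := {y | ∀ s < t, y s = c s}

/-- A finite sequence of lattice points, extended by the origin. -/
def extend (t : ℕ) (c : Fin t → Z2) : Path := fun u => if h : u < t then c ⟨u, h⟩ else (0, 0)

lemma extend_restrict (t : ℕ) (y : Path) (u : ℕ) (hu : u < t) :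
    extend t (fun j => y j) u = y u := by
  simp [extend, hu]

lemma measurableSet_cyl (t : ℕ) (c : Path) : MeasurableSet (cyl t c) := by
  have : cyl t c = ⋂ s, ⋂ _ : s < t, (fun y : Path => y s) ⁻¹' {c s} := by
    ext y; simp [cyl]
  rw [this]
  exact MeasurableSet.iInter fun s => MeasurableSet.iInter fun _ =>
    measurable_pi_apply s (measurableSet_singleton _)

lemma fseq_congr_of_mem_cyl (n : ℕ) (hn : 0 < n) (r : ℝ) (ρ : Config) {t : ℕ} {y c : Path}
    (h : y ∈ cyl t c) {u : ℕ} (hu : u ≤ t) : fseq n hn r ρ y u = fseq n hn r ρ c u :=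
  fseq_congr n hn r ρ u fun s hs => h s (hs.trans_le hu)

lemma mart_congr (q : ℝ) (n : ℕ) (hn : 0 < n) (r : ℝ) (ρ : Config) {t : ℕ} {y y' : Path}
    (h : ∀ u ≤ t, fseq n hn r ρ y u = fseq n hn r ρ y' u) :
    mart q n hn r ρ t y = mart q n hn r ρ t y' := by
  classical
  have hd : departures n (fun u => fseq n hn r ρ y u) t =
      departures n (fun u => fseq n hn r ρ y' u) t := by
    unfold departures
    congr 1
    refine Finset.filter_congr fun s hs => ?_
    have hs' := (Finset.mem_Icc.1 hs).2
    simp only [h s hs', h (s - 1) ((Nat.sub_le s 1).trans hs')]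
  have hv : visitedSet n (fun u => fseq n hn r ρ y u) t =
      visitedSet n (fun u => fseq n hn r ρ y' u) t := by
    ext x
    simp only [mem_visitedSet]
    exact exists_congr fun u => and_congr_right fun hu => by rw [h u hu]
  unfold mart
  rw [hd, hv, h t le_rfl]

/-- A function that factors through a map with countable range is measurable with respect to
the σ-algebra generated by that map. -/
lemma measurable_comap_of_countable_range {α β γ : Type*} [MeasurableSpace β]
    [MeasurableSingletonClass β] [MeasurableSpace γ] (f : α → β) (hf : (Set.range f).Countable)
    (g : β → γ) : Measurable[MeasurableSpace.comap f inferInstance] (g ∘ f) := by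
  intro A _
  refine ⟨g ⁻¹' A ∩ Set.range f, (hf.mono Set.inter_subset_right).measurableSet, ?_⟩
  ext x
  simp

lemma countable_range_hist (n : ℕ) (hn : 0 < n) (r : ℝ) (ρ : Config) (t : ℕ) :
    (Set.range fun (y : Path) (s : Fin (t + 1)) => fseq n hn r ρ y s).Countable := by
  refine (Set.countable_range fun (c : Fin t → Z2) (s : Fin (t + 1)) =>
    fseq n hn r ρ (extend t c) s).mono ?_
  rintro _ ⟨y, rfl⟩
  refine ⟨fun j => y j, funext fun s => ?_⟩
  exact fseq_congr n hn r ρ s fun u hu =>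
    extend_restrict t y u (hu.trans_le (Nat.lt_succ_iff.1 s.isLt))

lemma stronglyAdapted_mart (q : ℝ) (n : ℕ) (hn : 0 < n) (r : ℝ) (ρ : Config) :
    StronglyAdapted (filt n hn r ρ) fun t => mart q n hn r ρ t := by
  intro t
  have hfac : Function.FactorsThrough (mart q n hn r ρ t)
      (fun (y : Path) (s : Fin (t + 1)) => fseq n hn r ρ y s) := by
    intro y y' h
    exact mart_congr q n hn r ρ fun u hu => congrFun h ⟨u, Nat.lt_succ_of_le hu⟩
  obtain ⟨g, hg⟩ := (Function.factorsThrough_iff _).1 hfac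
  refine Measurable.stronglyMeasurable ?_
  dsimp only
  rw [hg]
  exact measurable_comap_of_countable_range _ (countable_range_hist n hn r ρ t) g

/-- Events of the natural filtration at time `t` depend only on the first `t` steps. -/
lemma mem_iff_of_measurableSet_filt (n : ℕ) (hn : 0 < n) (r : ℝ) (ρ : Config) {t : ℕ}
    {A : Set Path} (hA : MeasurableSet[filt n hn r ρ t] A) {y c : Path} (h : y ∈ cyl t c) :
    y ∈ A ↔ c ∈ A := by
  obtain ⟨B, _, rfl⟩ := hA
  have : (fun s : Fin (t + 1) => fseq n hn r ρ y s) = fun s : Fin (t + 1) => fseq n hn r ρ c s :=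
    funext fun s => fseq_congr_of_mem_cyl n hn r ρ h (Nat.lt_succ_iff.1 s.isLt)
  simp only [Set.mem_preimage, this]

lemma ae_fweight_ne_zero {q : ℝ} {n : ℕ} {hn : 0 < n} {r : ℝ} {ρ : Config} {μ : Measure Path}
    (hμ : IsFrozenLaw q n hn r ρ μ) :
    ∀ᵐ y ∂μ, ∀ t, fweight q n r (fseq n hn r ρ y t) (active n hn t) (y t) ≠ 0 := by
  rw [ae_all_iff]
  intro t
  rw [ae_iff]
  have hsub : {y : Path | ¬ fweight q n r (fseq n hn r ρ y t) (active n hn t) (y t) ≠ 0} ⊆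
      ⋃ c : {c : Fin (t + 1) → Z2 // fweight q n r (fseq n hn r ρ (extend (t + 1) c) t)
        (active n hn t) (extend (t + 1) c t) = 0}, cyl (t + 1) (extend (t + 1) c) := by
    intro y hy
    have hmem : y ∈ cyl (t + 1) (extend (t + 1) fun j => y j) :=
      fun s hs => (extend_restrict (t + 1) y s hs).symm
    refine Set.mem_iUnion.2 ⟨⟨fun j => y j, ?_⟩, hmem⟩
    rw [← fseq_congr_of_mem_cyl n hn r ρ hmem (Nat.le_succ t),
      extend_restrict _ _ _ (Nat.lt_succ_self t)]
    exact not_not.1 hy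
  refine measure_mono_null hsub (measure_iUnion_null fun c => ?_)
  rw [cyl, hμ (t + 1)]
  exact Finset.prod_eq_zero (Finset.self_mem_range_succ t) c.2

/-- The square `[-t, t]²` in `ℤ²`. -/
def box (t : ℕ) : Set Z2 := Set.Icc (-(t : ℤ), -(t : ℤ)) ((t : ℤ), (t : ℤ))

lemma mem_box (t : ℕ) (x : Z2) :
    x ∈ box t ↔ (-(t : ℤ) ≤ x.1 ∧ -(t : ℤ) ≤ x.2) ∧ x.1 ≤ t ∧ x.2 ≤ t := by
  simp [box, Prod.le_def]

lemma mem_box_succ_of_fweight_ne_zero {q : ℝ} {n : ℕ} {r : ℝ} {s : State n} {i : Fin n} {v : Z2}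
    {t : ℕ} (hs : s.1 i ∈ box t) (h : fweight q n r s i v ≠ 0) : v ∈ box (t + 1) := by
  rw [mem_box] at hs ⊢
  have hv : v = s.1 i ∨
      v ∈ ({s.1 i + (1, 0), s.1 i - (1, 0), s.1 i + (0, 1), s.1 i - (0, 1)} : Finset Z2) := by
    by_contra hcon
    rw [not_or] at hcon
    apply h
    rw [fweight, if_neg hcon.1, weight_eq_zero q n s i v hcon.2, ite_self]
  push_cast
  simp only [Finset.mem_insert, Finset.mem_singleton] at hv
  rcases hv with rfl | rfl | rfl | rfl | rfl <;>
    (try simp only [Prod.fst_add, Prod.snd_add, Prod.fst_sub, Prod.snd_sub]) <;> omega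

lemma fseq_mem_box {q : ℝ} {n : ℕ} {hn : 0 < n} {r : ℝ} {ρ : Config} {y : Path}
    (hy : ∀ t, fweight q n r (fseq n hn r ρ y t) (active n hn t) (y t) ≠ 0) (t : ℕ) (j : Fin n) :
    (fseq n hn r ρ y t).1 j ∈ box t := by
  induction t generalizing j with
  | zero => simp [mem_box, fseq]
  | succ t ih =>
    have hmono : (fseq n hn r ρ y t).1 j ∈ box (t + 1) := by
      have := ih j
      rw [mem_box] at this ⊢
      push_cast
      omega
    rw [fseq, fapply]
    split_ifs
    · exact hmono
    · simp only [apply']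
      by_cases hj : j = active n hn t
      · subst hj
        rw [Function.update_self]
        exact mem_box_succ_of_fweight_ne_zero (ih _) (hy t)
      · rwa [Function.update_of_ne hj]

/-- Almost surely the walk makes unit steps, so `M_t` takes only finitely many values. -/
lemma integrable_mart {q : ℝ} {n : ℕ} {hn : 0 < n} {r : ℝ} {ρ : Config} {μ : Measure Path}
    [IsProbabilityMeasure μ] (hμ : IsFrozenLaw q n hn r ρ μ) (t : ℕ) :
    Integrable (mart q n hn r ρ t) μ := by
  have hfin : {c : Fin t → Z2 | ∀ j, c j ∈ box t}.Finite :=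
    Set.Finite.pi' fun _ => Set.finite_Icc _ _
  obtain ⟨C, hC⟩ := (hfin.image fun c => ‖mart q n hn r ρ t (extend t c)‖).bddAbove
  refine Integrable.of_bound
    (((stronglyAdapted_mart q n hn r ρ t).mono ((filt n hn r ρ).le t)).aestronglyMeasurable) C ?_
  filter_upwards [ae_fweight_ne_zero hμ] with y hy
  refine hC ⟨fun j => y j, fun j => ?_, ?_⟩
  · have h := mem_box_succ_of_fweight_ne_zero (fseq_mem_box hy j _) (hy j)
    have hj := j.isLt
    rw [mem_box] at h ⊢
    push_cast at h
    dsimp only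
    omega
  · dsimp only
    rw [mart_congr q n hn r ρ fun u hu => fseq_congr n hn r ρ u fun s hs =>
      extend_restrict t y s (hs.trans_le hu)]

lemma integrable_mart_sub {q : ℝ} {n : ℕ} {hn : 0 < n} {r : ℝ} {ρ : Config} {μ : Measure Path}
    [IsProbabilityMeasure μ] (hμ : IsFrozenLaw q n hn r ρ μ) (t : ℕ) :
    Integrable (fun y => mart q n hn r ρ (t + 1) y - mart q n hn r ρ t y) μ :=
  (integrable_mart hμ (t + 1)).sub (integrable_mart hμ t)

/-- The integral over the cylinder of `c` of a function of the first `t + 1` steps is the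
probability of `c` times a one-step expectation. -/
lemma setIntegral_cyl {q : ℝ} {n : ℕ} {hn : 0 < n} {r : ℝ} {ρ : Config} {μ : Measure Path}
    (hμ : IsFrozenLaw q n hn r ρ μ) (t : ℕ) (c : Path) {F : Path → ℝ} (hF : Integrable F μ)
    {D : Z2 → ℝ} (hD : ∀ y ∈ cyl t c, F y = D (y t)) :
    ∫ y in cyl t c, F y ∂μ = (μ (cyl t c)).toReal *
      ∑' v, (fweight q n r (fseq n hn r ρ c t) (active n hn t) v).toReal * D v := by
  have hsub : ∀ v, cyl (t + 1) (Function.update c t v) = cyl t c ∩ {y | y t = v} := by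
    intro v
    ext y
    constructor
    · intro h
      refine ⟨fun s hs => ?_, ?_⟩
      · rw [h s (hs.trans (Nat.lt_succ_self t)), Function.update_of_ne hs.ne]
      · have := h t (Nat.lt_succ_self t)
        rwa [Function.update_self] at this
    · rintro ⟨h, hv⟩ s hs
      rcases Nat.lt_succ_iff_lt_or_eq.1 hs with hs | rfl
      · rw [Function.update_of_ne hs.ne, h s hs]
      · rw [Function.update_self]; exact hv
  have hunion : cyl t c = ⋃ v, cyl (t + 1) (Function.update c t v) := by
    simp_rw [hsub]
    ext y
    simp
  have hdisj : Pairwise (Function.onFun Disjoint fun v => cyl (t + 1) (Function.update c t v)) := by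
    intro v w hvw
    simp only [Function.onFun, hsub]
    rw [Set.disjoint_left]
    rintro y ⟨_, hv⟩ ⟨_, hw⟩
    exact hvw (hv.symm.trans hw)
  have hmeas : ∀ v, μ (cyl (t + 1) (Function.update c t v)) = μ (cyl t c) *
      fweight q n r (fseq n hn r ρ c t) (active n hn t) v := by
    intro v
    have hmem : Function.update c t v ∈ cyl t c := fun s hs => Function.update_of_ne hs.ne _ _
    rw [cyl, hμ, cyl, hμ, Finset.prod_range_succ, Function.update_self,
      fseq_congr_of_mem_cyl n hn r ρ hmem le_rfl]
    congr 1
    refine Finset.prod_congr rfl fun s hs => ?_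
    have hs' := Finset.mem_range.1 hs
    rw [fseq_congr_of_mem_cyl n hn r ρ hmem hs'.le, hmem s hs']
  conv_lhs => rw [hunion]
  rw [integral_iUnion (fun v => measurableSet_cyl _ _) hdisj hF.integrableOn, ← tsum_mul_left]
  refine tsum_congr fun v => ?_
  rw [setIntegral_congr_fun (g := fun _ => D v) (measurableSet_cyl _ _), setIntegral_const,
    measureReal_def, hmeas, ENNReal.toReal_mul, smul_eq_mul, mul_assoc]
  intro y hy
  rw [hsub] at hy
  rw [hD y hy.1, hy.2]

/-- The increment of `M` integrates to zero over every cylinder set. -/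
lemma setIntegral_cyl_mart_sub {q : ℝ} (hq : q ∈ Set.Ioc (0 : ℝ) 1) {n : ℕ} {hn : 0 < n} {r : ℝ}
    {ρ : Config} {μ : Measure Path} [IsProbabilityMeasure μ] (hμ : IsFrozenLaw q n hn r ρ μ)
    (t : ℕ) (c : Path) :
    ∫ y in cyl t c, (mart q n hn r ρ (t + 1) y - mart q n hn r ρ t y) ∂μ = 0 := by
  by_cases h : (fseq n hn r ρ c t).1 (active n hn t) ∈ bdry r
  · refine setIntegral_eq_zero_of_forall_eq_zero fun y hy => ?_
    rw [← fseq_congr_of_mem_cyl n hn r ρ hy le_rfl] at h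
    rw [mart_succ_frozen q n hn r ρ y t h, sub_self]
  · rw [setIntegral_cyl hμ t c (integrable_mart_sub hμ t)
      (D := incr q n (fseq n hn r ρ c t) (active n hn t))]
    · simp only [fweight, if_neg h]
      rw [tsum_weight_mul_incr q hq, mul_zero]
    · intro y hy
      rw [← fseq_congr_of_mem_cyl n hn r ρ hy le_rfl] at h ⊢
      exact mart_succ q n hn r ρ y t h

lemma setIntegral_mart_sub {q : ℝ} (hq : q ∈ Set.Ioc (0 : ℝ) 1) {n : ℕ} {hn : 0 < n} {r : ℝ}
    {ρ : Config} {μ : Measure Path} [IsProbabilityMeasure μ] (hμ : IsFrozenLaw q n hn r ρ μ)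
    (t : ℕ) {A : Set Path} (hA : MeasurableSet[filt n hn r ρ t] A) :
    ∫ y in A, (mart q n hn r ρ (t + 1) y - mart q n hn r ρ t y) ∂μ = 0 := by
  have hunion : A = ⋃ c : {c : Fin t → Z2 // extend t c ∈ A}, cyl t (extend t c) := by
    ext y
    rw [Set.mem_iUnion]
    constructor
    · intro hy
      have hmem : y ∈ cyl t (extend t fun j => y j) :=
        fun s hs => (extend_restrict t y s hs).symm
      exact ⟨⟨fun j => y j, (mem_iff_of_measurableSet_filt n hn r ρ hA hmem).1 hy⟩, hmem⟩
    · rintro ⟨c, hc⟩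
      exact (mem_iff_of_measurableSet_filt n hn r ρ hA hc).2 c.2
  have hdisj : Pairwise (Function.onFun Disjoint
      fun c : {c : Fin t → Z2 // extend t c ∈ A} => cyl t (extend t c)) := by
    intro c d hcd
    rw [Function.onFun, Set.disjoint_left]
    intro y hc hd
    refine hcd (Subtype.ext (funext fun j => ?_))
    have := (hc j j.isLt).symm.trans (hd j j.isLt)
    simpa [extend] using this
  rw [hunion, integral_iUnion (fun c => measurableSet_cyl _ _) hdisj
    (integrable_mart_sub hμ t).integrableOn]
  simp only [setIntegral_cyl_mart_sub hq hμ, tsum_zero]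

end HV

/-- **Lemma (the process `M_t` is a martingale).**
Fix `q ∈ (0,1]`, `n ≥ 1`, `r ≥ 1` and an initial label configuration `ρ`, and let
`(Y_t, ζ_t)` be the frozen `n`-walker `H`–`V` walk in `B_r`.  Then
`M_t = Σᵢ a(Y_t⁽ⁱ⁾) − N_t + ((2q−1)/q) Σ_{x visited} (wt_{ζ_t}(x) − wt_{ζ_0}(x))`
is a martingale with respect to the natural filtration
`F_t = σ(Y_0, ζ_0, …, Y_t, ζ_t)`. -/
theorem hv_mart_is_martingale
    (q : ℝ) (hq : q ∈ Set.Ioc (0 : ℝ) 1) (n : ℕ) (hn : 0 < n)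
    (r : ℝ) (hr : 1 ≤ r) (ρ : HV.Config)
    (μr : MeasureTheory.Measure HV.Path) [MeasureTheory.IsProbabilityMeasure μr]
    (hμr : HV.IsFrozenLaw q n hn r ρ μr) :
    MeasureTheory.Martingale (fun t => HV.mart q n hn r ρ t) (HV.filt n hn r ρ) μr := by
  refine martingale_of_setIntegral_eq_succ (HV.stronglyAdapted_mart q n hn r ρ)
    (HV.integrable_mart hμr) fun t A hA => ?_
  rw [eq_comm, ← sub_eq_zero, ← integral_sub (HV.integrable_mart hμr (t + 1)).integrableOn
    (HV.integrable_mart hμr t).integrableOn]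
  exact HV.setIntegral_mart_sub hq hμr t hA
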